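/- Let N be a finite-dimensional simple left P_k(Ē)-module. Exactly one of the following holds: (1) N ≅ coker(ν_i) for some non-sink vertex i ∈ E^0, in which case L_k(E) ⊗_{P_k(Ē)} N = 0; or (2) N is not isomorphic to coker(ν_i) for any non-sink i ∈ E^0, in which case L_k(E) ⊗_{P_k(Ē)} N is a simple left L_k(E)-module. -/

import Mathlib

namespace LPA

/-- A finite quiver: finite sets of vertices and arrows with source and target maps. -/
structure FinQuiver : Type 1 where
  V : Type
  A : Type
  [fintypeV : Fintype V]
  [decEqV : DecidableEq V]
  [fintypeA : Fintype A]
  [decEqA : DecidableEq A]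
  src : A → V
  tgt : A → V

attribute [instance] FinQuiver.fintypeV FinQuiver.decEqV FinQuiver.fintypeA FinQuiver.decEqA

/-- The inverse quiver: all arrows reversed. -/
def FinQuiver.rev (Q : FinQuiver) : FinQuiver where
  V := Q.V
  A := Q.A
  fintypeV := Q.fintypeV
  decEqV := Q.decEqV
  fintypeA := Q.fintypeA
  decEqA := Q.decEqA
  src := Q.tgt
  tgt := Q.src

/-- Generators of the path algebra: a trivial path `p v` for each vertex and an arrow `e` for
each arrow. -/
inductive PathGen (Q : FinQuiver) : Type
  | vertex (v : Q.V) : PathGen Q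
  | edge (e : Q.A) : PathGen Q

/-- Defining relations of the path algebra: the trivial paths are pairwise orthogonal
idempotents summing to `1`, and `p (src e) * e = e = e * p (tgt e)`. -/
inductive PathRel (k : Type) [CommRing k] (Q : FinQuiver) :
    FreeAlgebra k (PathGen Q) → FreeAlgebra k (PathGen Q) → Prop
  | vertex_mul_self (v : Q.V) :
      PathRel k Q (FreeAlgebra.ι k (PathGen.vertex v) * FreeAlgebra.ι k (PathGen.vertex v))
        (FreeAlgebra.ι k (PathGen.vertex v))
  | vertex_mul_ne (v w : Q.V) (h : v ≠ w) :
      PathRel k Q (FreeAlgebra.ι k (PathGen.vertex v) * FreeAlgebra.ι k (PathGen.vertex w)) 0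
  | sum_vertex :
      PathRel k Q (∑ v : Q.V, FreeAlgebra.ι k (PathGen.vertex v)) 1
  | src_mul (e : Q.A) :
      PathRel k Q
        (FreeAlgebra.ι k (PathGen.vertex (Q.src e)) * FreeAlgebra.ι k (PathGen.edge e))
        (FreeAlgebra.ι k (PathGen.edge e))
  | mul_tgt (e : Q.A) :
      PathRel k Q
        (FreeAlgebra.ι k (PathGen.edge e) * FreeAlgebra.ι k (PathGen.vertex (Q.tgt e)))
        (FreeAlgebra.ι k (PathGen.edge e))

/-- The path algebra `P_k(Q)` of a finite quiver `Q`, presented by generators and relations. -/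
def PathAlg (k : Type) [CommRing k] (Q : FinQuiver) : Type :=
  RingQuot (PathRel k Q)

variable (k : Type) [CommRing k] (Q : FinQuiver)

noncomputable instance : Ring (PathAlg k Q) :=
  inferInstanceAs (Ring (RingQuot (PathRel k Q)))

noncomputable instance : Algebra k (PathAlg k Q) :=
  inferInstanceAs (Algebra k (RingQuot (PathRel k Q)))

/-- The quotient map from the free algebra onto the path algebra. -/
noncomputable def PathAlg.mk : FreeAlgebra k (PathGen Q) →ₐ[k] PathAlg k Q :=
  RingQuot.mkAlgHom k (PathRel k Q)

/-- The trivial path (vertex idempotent) `p v` in the path algebra. -/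
noncomputable def PathAlg.p (v : Q.V) : PathAlg k Q :=
  PathAlg.mk k Q (FreeAlgebra.ι k (PathGen.vertex v))

/-- The arrow `e` in the path algebra. -/
noncomputable def PathAlg.arrow (e : Q.A) : PathAlg k Q :=
  PathAlg.mk k Q (FreeAlgebra.ι k (PathGen.edge e))

theorem PathAlg.mk_rel {x y : FreeAlgebra k (PathGen Q)} (h : PathRel k Q x y) :
    PathAlg.mk k Q x = PathAlg.mk k Q y :=
  RingQuot.mkAlgHom_rel k h

theorem PathAlg.p_mul_self (v : Q.V) : PathAlg.p k Q v * PathAlg.p k Q v = PathAlg.p k Q v := by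
  have h := PathAlg.mk_rel k Q (PathRel.vertex_mul_self v)
  simpa [map_mul, PathAlg.p] using h

theorem PathAlg.p_mul_ne (v w : Q.V) (hvw : v ≠ w) :
    PathAlg.p k Q v * PathAlg.p k Q w = 0 := by
  have h := PathAlg.mk_rel k Q (PathRel.vertex_mul_ne v w hvw)
  simpa [map_mul, PathAlg.p] using h

theorem PathAlg.sum_p : (∑ v : Q.V, PathAlg.p k Q v) = 1 := by
  have h := PathAlg.mk_rel k Q (PathRel.sum_vertex)
  simpa [map_sum, PathAlg.p] using h

theorem PathAlg.arrow_mul_tgt (e : Q.A) :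
    PathAlg.arrow k Q e * PathAlg.p k Q (Q.tgt e) = PathAlg.arrow k Q e := by
  have h := PathAlg.mk_rel k Q (PathRel.mul_tgt e)
  simpa [map_mul, PathAlg.p, PathAlg.arrow] using h

theorem PathAlg.src_mul_arrow (e : Q.A) :
    PathAlg.p k Q (Q.src e) * PathAlg.arrow k Q e = PathAlg.arrow k Q e := by
  have h := PathAlg.mk_rel k Q (PathRel.src_mul e)
  simpa [map_mul, PathAlg.p, PathAlg.arrow] using h

/-- The set of vertices `{p v | v ∈ Q.V}` of the path algebra, as a finite set. -/
noncomputable def vertexFinset : Finset (PathAlg k Q) :=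
  letI := Classical.decEq (PathAlg k Q)
  Finset.univ.image (PathAlg.p k Q)

end LPA

namespace LPA

/-- Generators of the Leavitt path algebra: vertex idempotents, arrows, and ghost arrows. -/
inductive LGen (Q : FinQuiver) : Type
  | vertex (v : Q.V) : LGen Q
  | edge (e : Q.A) : LGen Q
  | ghost (e : Q.A) : LGen Q

/-- Defining relations of the Leavitt path algebra `L_k(E)`: (V), (E1), (E2), (CK1), (CK2),
together with `∑ p_v = 1`. -/
inductive LeavittRel (k : Type) [CommRing k] (Q : FinQuiver) :
    FreeAlgebra k (LGen Q) → FreeAlgebra k (LGen Q) → Prop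
  | vertex_mul_self (v : Q.V) :
      LeavittRel k Q (FreeAlgebra.ι k (LGen.vertex v) * FreeAlgebra.ι k (LGen.vertex v))
        (FreeAlgebra.ι k (LGen.vertex v))
  | vertex_mul_ne (v w : Q.V) (h : v ≠ w) :
      LeavittRel k Q (FreeAlgebra.ι k (LGen.vertex v) * FreeAlgebra.ι k (LGen.vertex w)) 0
  | sum_vertex :
      LeavittRel k Q (∑ v : Q.V, FreeAlgebra.ι k (LGen.vertex v)) 1
  | src_mul (e : Q.A) :
      LeavittRel k Q (FreeAlgebra.ι k (LGen.vertex (Q.src e)) * FreeAlgebra.ι k (LGen.edge e))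
        (FreeAlgebra.ι k (LGen.edge e))
  | mul_tgt (e : Q.A) :
      LeavittRel k Q (FreeAlgebra.ι k (LGen.edge e) * FreeAlgebra.ι k (LGen.vertex (Q.tgt e)))
        (FreeAlgebra.ι k (LGen.edge e))
  | tgt_mul_ghost (e : Q.A) :
      LeavittRel k Q (FreeAlgebra.ι k (LGen.vertex (Q.tgt e)) * FreeAlgebra.ι k (LGen.ghost e))
        (FreeAlgebra.ι k (LGen.ghost e))
  | ghost_mul_src (e : Q.A) :
      LeavittRel k Q (FreeAlgebra.ι k (LGen.ghost e) * FreeAlgebra.ι k (LGen.vertex (Q.src e)))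
        (FreeAlgebra.ι k (LGen.ghost e))
  | ghost_mul_edge_self (e : Q.A) :
      LeavittRel k Q (FreeAlgebra.ι k (LGen.ghost e) * FreeAlgebra.ι k (LGen.edge e))
        (FreeAlgebra.ι k (LGen.vertex (Q.tgt e)))
  | ghost_mul_edge_ne (e f : Q.A) (h : e ≠ f) :
      LeavittRel k Q (FreeAlgebra.ι k (LGen.ghost e) * FreeAlgebra.ι k (LGen.edge f)) 0
  | cuntz_krieger (v : Q.V) (h : ∃ e : Q.A, Q.src e = v) :
      LeavittRel k Q
        (∑ e ∈ Finset.univ.filter (fun e : Q.A => Q.src e = v),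
          FreeAlgebra.ι k (LGen.edge e) * FreeAlgebra.ι k (LGen.ghost e))
        (FreeAlgebra.ι k (LGen.vertex v))

/-- The Leavitt path algebra `L_k(E)`. -/
def Leavitt (k : Type) [CommRing k] (Q : FinQuiver) : Type :=
  RingQuot (LeavittRel k Q)

variable (k : Type) [CommRing k] (Q : FinQuiver)

noncomputable instance : Ring (Leavitt k Q) :=
  inferInstanceAs (Ring (RingQuot (LeavittRel k Q)))

noncomputable instance : Algebra k (Leavitt k Q) :=
  inferInstanceAs (Algebra k (RingQuot (LeavittRel k Q)))

/-- The quotient map from the free algebra onto the Leavitt path algebra. -/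
noncomputable def Leavitt.mk : FreeAlgebra k (LGen Q) →ₐ[k] Leavitt k Q :=
  RingQuot.mkAlgHom k (LeavittRel k Q)

/-- The vertex idempotent `p v` in the Leavitt path algebra. -/
noncomputable def Leavitt.p (v : Q.V) : Leavitt k Q :=
  Leavitt.mk k Q (FreeAlgebra.ι k (LGen.vertex v))

/-- The arrow `e` in the Leavitt path algebra. -/
noncomputable def Leavitt.ed (e : Q.A) : Leavitt k Q :=
  Leavitt.mk k Q (FreeAlgebra.ι k (LGen.edge e))

/-- The ghost arrow `ē` in the Leavitt path algebra. -/
noncomputable def Leavitt.gh (e : Q.A) : Leavitt k Q :=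
  Leavitt.mk k Q (FreeAlgebra.ι k (LGen.ghost e))

theorem Leavitt.mk_rel {x y : FreeAlgebra k (LGen Q)} (h : LeavittRel k Q x y) :
    Leavitt.mk k Q x = Leavitt.mk k Q y :=
  RingQuot.mkAlgHom_rel k h

theorem Leavitt.p_mul_self (v : Q.V) : Leavitt.p k Q v * Leavitt.p k Q v = Leavitt.p k Q v := by
  have h := Leavitt.mk_rel k Q (LeavittRel.vertex_mul_self v)
  simpa [map_mul, Leavitt.p] using h

theorem Leavitt.p_mul_ne (v w : Q.V) (hvw : v ≠ w) :
    Leavitt.p k Q v * Leavitt.p k Q w = 0 := by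
  have h := Leavitt.mk_rel k Q (LeavittRel.vertex_mul_ne v w hvw)
  simpa [map_mul, Leavitt.p] using h

theorem Leavitt.sum_p : (∑ v : Q.V, Leavitt.p k Q v) = 1 := by
  have h := Leavitt.mk_rel k Q (LeavittRel.sum_vertex)
  simpa [map_sum, Leavitt.p] using h

theorem Leavitt.tgt_mul_gh (e : Q.A) :
    Leavitt.p k Q (Q.tgt e) * Leavitt.gh k Q e = Leavitt.gh k Q e := by
  have h := Leavitt.mk_rel k Q (LeavittRel.tgt_mul_ghost e)
  simpa [map_mul, Leavitt.p, Leavitt.gh] using h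

theorem Leavitt.gh_mul_src (e : Q.A) :
    Leavitt.gh k Q e * Leavitt.p k Q (Q.src e) = Leavitt.gh k Q e := by
  have h := Leavitt.mk_rel k Q (LeavittRel.ghost_mul_src e)
  simpa [map_mul, Leavitt.p, Leavitt.gh] using h

/-- The canonical embedding `P_k(Ē) → L_k(E)` of the path algebra of the inverse quiver into
the Leavitt path algebra, sending `p v ↦ p v` and each reversed arrow `ē ↦ ē`. -/
noncomputable def revToLeavitt : PathAlg k Q.rev →ₐ[k] Leavitt k Q :=
  RingQuot.liftAlgHom k ⟨((FreeAlgebra.lift k fun g =>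
    match g with
    | PathGen.vertex v => Leavitt.p k Q v
    | PathGen.edge e => Leavitt.gh k Q e : FreeAlgebra k (PathGen Q.rev) →ₐ[k] Leavitt k Q)), by
      intro x y h
      induction h with
      | vertex_mul_self v =>
          simp only [map_mul, FreeAlgebra.lift_ι_apply]
          exact Leavitt.p_mul_self k Q v
      | vertex_mul_ne v w h =>
          simp only [map_mul, map_zero, FreeAlgebra.lift_ι_apply]
          exact Leavitt.p_mul_ne k Q v w h
      | sum_vertex =>
          simp only [map_sum, map_one, FreeAlgebra.lift_ι_apply]
          exact Leavitt.sum_p k Q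
      | src_mul e =>
          simp only [map_mul, FreeAlgebra.lift_ι_apply]
          exact Leavitt.tgt_mul_gh k Q e
      | mul_tgt e =>
          simp only [map_mul, FreeAlgebra.lift_ι_apply]
          exact Leavitt.gh_mul_src k Q e⟩

/-- The canonical embedding `P_k(E) → L_k(E)` of the path algebra into the Leavitt path
algebra, sending `p v ↦ p v` and each arrow `e ↦ e`. -/
noncomputable def pathToLeavitt : PathAlg k Q →ₐ[k] Leavitt k Q :=
  RingQuot.liftAlgHom k ⟨((FreeAlgebra.lift k fun g =>
    match g with
    | PathGen.vertex v => Leavitt.p k Q v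
    | PathGen.edge e => Leavitt.ed k Q e : FreeAlgebra k (PathGen Q) →ₐ[k] Leavitt k Q)), by
      intro x y h
      induction h with
      | vertex_mul_self v =>
          simp only [map_mul, FreeAlgebra.lift_ι_apply]
          exact Leavitt.p_mul_self k Q v
      | vertex_mul_ne v w h =>
          simp only [map_mul, map_zero, FreeAlgebra.lift_ι_apply]
          exact Leavitt.p_mul_ne k Q v w h
      | sum_vertex =>
          simp only [map_sum, map_one, FreeAlgebra.lift_ι_apply]
          exact Leavitt.sum_p k Q
      | src_mul e =>
          simp only [map_mul, FreeAlgebra.lift_ι_apply]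
          have h := Leavitt.mk_rel k Q (LeavittRel.src_mul e)
          simpa [map_mul, Leavitt.p, Leavitt.ed] using h
      | mul_tgt e =>
          simp only [map_mul, FreeAlgebra.lift_ι_apply]
          have h := Leavitt.mk_rel k Q (LeavittRel.mul_tgt e)
          simpa [map_mul, Leavitt.p, Leavitt.ed] using h⟩

end LPA

namespace LPA

open TensorProduct

variable (P L : Type) [Ring P] [Ring L] (φ : P →+* L)

/-- The subgroup of relations defining the balanced tensor product `L ⊗_P M` (where `L` is a
right `P`-module via `φ` and `M` a left `P`-module) as a quotient of `L ⊗_ℤ M`. -/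
noncomputable def trel (M : Type) [AddCommGroup M] [Module P M] :
    Submodule L (TensorProduct ℤ L M) :=
  Submodule.span L
    {z | ∃ (l : L) (p : P) (m : M), z = (l * φ p) ⊗ₜ[ℤ] m - l ⊗ₜ[ℤ] (p • m)}

/-- The balanced tensor product `L ⊗_P M`, a left `L`-module. -/
abbrev TensorPhi (M : Type) [AddCommGroup M] [Module P M] : Type :=
  TensorProduct ℤ L M ⧸ trel P L φ M

/-- Functoriality of `L ⊗_P -` : the map induced on balanced tensor products by a `P`-linear
map `f : M → N`. -/
noncomputable def tmap {M N : Type} [AddCommGroup M] [Module P M] [AddCommGroup N]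
    [Module P N] (f : M →ₗ[P] N) : TensorPhi P L φ M →ₗ[L] TensorPhi P L φ N :=
  Submodule.mapQ _ _
    (TensorProduct.AlgebraTensorModule.map (LinearMap.id : L →ₗ[L] L)
      f.toAddMonoidHom.toIntLinearMap)
    (by
      refine Submodule.span_le.mpr ?_
      rintro z ⟨l, p, m, rfl⟩
      simp only [SetLike.mem_coe, Submodule.mem_comap, map_sub,
        TensorProduct.AlgebraTensorModule.map_tmul, LinearMap.id_coe, id_eq,
        AddMonoidHom.coe_toIntLinearMap, LinearMap.toAddMonoidHom_coe]
      exact Submodule.subset_span ⟨l, p, f m, by rw [f.map_smul]⟩)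

/-- `L` is flat as a right `P`-module (via `φ : P → L`): the functor `L ⊗_P -` preserves
injectivity. -/
def RightFlat : Prop :=
  ∀ (M N : Type) [AddCommGroup M] [Module P M] [AddCommGroup N] [Module P N],
    ∀ f : M →ₗ[P] N, Function.Injective f → Function.Injective (tmap P L φ f)

end LPA

namespace LPA

/-- Right multiplication by a fixed element, as an endomorphism of the left regular module. -/
noncomputable def rightMul (R : Type) [Ring R] (x : R) : R →ₗ[R] R where
  toFun y := y * x
  map_add' a b := add_mul a b x
  map_smul' r y := by simp [smul_eq_mul, mul_assoc]

variable (k : Type) [CommRing k] (Q : FinQuiver)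

/-- The principal left ideal `P_k(Ē)·p_v` of the path algebra of the inverse quiver. -/
noncomputable def pIdeal (v : Q.V) : Submodule (PathAlg k Q.rev) (PathAlg k Q.rev) :=
  LinearMap.range (rightMul (PathAlg k Q.rev) (PathAlg.p k Q.rev v))

/-- The principal left ideal `L_k(E)·p_v` of the Leavitt path algebra. -/
noncomputable def pIdealL (v : Q.V) : Submodule (Leavitt k Q) (Leavitt k Q) :=
  LinearMap.range (rightMul (Leavitt k Q) (Leavitt.p k Q v))

/-- A sink: a vertex emitting no arrows. -/
def IsSink (v : Q.V) : Prop := ∀ e : Q.A, Q.src e ≠ v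

/-- For a non-sink vertex `i` (and, degenerately, for a sink, where the domain is trivial),
the left `P_k(Ē)`-module homomorphism
`ν_i : ⊕_{e ∈ s⁻¹(i)} P_k(Ē)·p_{r(e)} → P_k(Ē)·p_i`, `(r_e) ↦ ∑ r_e·ē`. -/
noncomputable def nu (i : Q.V) :
    ((e : {e : Q.A // Q.src e = i}) → ↥(pIdeal k Q (Q.tgt e.1)))
      →ₗ[PathAlg k Q.rev] ↥(pIdeal k Q i) :=
  LinearMap.codRestrict (pIdeal k Q i)
    { toFun := fun x =>
        ∑ e : {e : Q.A // Q.src e = i}, ((x e : PathAlg k Q.rev) * PathAlg.arrow k Q.rev e.1)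
      map_add' := by
        intro a b
        simp [add_mul, Finset.sum_add_distrib]
      map_smul' := by
        intro r x
        simp [smul_eq_mul, Finset.mul_sum, mul_assoc] }
    (by
      intro x
      refine ⟨∑ e : {e : Q.A // Q.src e = i},
        ((x e : PathAlg k Q.rev) * PathAlg.arrow k Q.rev e.1), ?_⟩
      simp only [rightMul, LinearMap.coe_mk, AddHom.coe_mk, Finset.sum_mul]
      refine Finset.sum_congr rfl fun e _ => ?_
      obtain ⟨e, he⟩ := e
      subst he
      rw [mul_assoc]
      congr 1
      exact PathAlg.arrow_mul_tgt k Q.rev e)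

/-- The cokernel of `ν_i`, a finite-dimensional simple `P_k(Ē)`-module. -/
abbrev CokerNu (i : Q.V) : Type :=
  ↥(pIdeal k Q i) ⧸ LinearMap.range (nu k Q i)

/-- Reachability by a (possibly trivial) path in the quiver `E`. -/
inductive Reaches : Q.V → Q.V → Prop
  | refl (v : Q.V) : Reaches v v
  | step (e : Q.A) {w : Q.V} : Reaches (Q.tgt e) w → Reaches (Q.src e) w

end LPA

namespace LPA

/-- A composition series `0 = c 0 < c 1 < … < c ℓ = M` with simple factors. -/
def IsCompSeries {R M : Type} [Ring R] [AddCommGroup M] [Module R M] (ℓ : ℕ)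
    (c : Fin (ℓ + 1) → Submodule R M) : Prop :=
  c 0 = ⊥ ∧ c (Fin.last ℓ) = ⊤ ∧
    ∀ i : Fin ℓ, c i.castSucc < c i.succ ∧
      IsSimpleModule R
        (↥(c i.succ) ⧸ Submodule.comap (c i.succ).subtype (c i.castSucc))

/-- The `i`-th factor `c (i+1) / c i` of a series of submodules. -/
abbrev SeriesFactor {R M : Type} [Ring R] [AddCommGroup M] [Module R M] {ℓ : ℕ}
    (c : Fin (ℓ + 1) → Submodule R M) (i : Fin ℓ) : Type :=
  ↥(c i.succ) ⧸ Submodule.comap (c i.succ).subtype (c i.castSucc)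

end LPA

namespace LPA

theorem PathAlg.induct (k : Type) [CommRing k] (Q : FinQuiver) {C : PathAlg k Q → Prop}
    (halg : ∀ c : k, C (algebraMap k _ c)) (hp : ∀ v, C (PathAlg.p k Q v))
    (har : ∀ e, C (PathAlg.arrow k Q e)) (hmul : ∀ a b, C a → C b → C (a * b))
    (hadd : ∀ a b, C a → C b → C (a + b)) (x : PathAlg k Q) : C x := by
  obtain ⟨y, rfl⟩ : ∃ y, PathAlg.mk k Q y = x := RingQuot.mkAlgHom_surjective k (PathRel k Q) x
  induction y using FreeAlgebra.induction with
  | grade0 c => rw [AlgHom.commutes]; exact halg c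
  | grade1 g => cases g with
    | vertex v => exact hp v
    | edge e => exact har e
  | mul a b ha hb => rw [map_mul]; exact hmul _ _ ha hb
  | add a b ha hb => rw [map_add]; exact hadd _ _ ha hb

theorem Leavitt.induct (k : Type) [CommRing k] (Q : FinQuiver) {C : Leavitt k Q → Prop}
    (halg : ∀ c : k, C (algebraMap k _ c)) (hp : ∀ v, C (Leavitt.p k Q v))
    (hed : ∀ e, C (Leavitt.ed k Q e)) (hgh : ∀ e, C (Leavitt.gh k Q e))
    (hmul : ∀ a b, C a → C b → C (a * b))
    (hadd : ∀ a b, C a → C b → C (a + b)) (x : Leavitt k Q) : C x := by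
  obtain ⟨y, rfl⟩ : ∃ y, Leavitt.mk k Q y = x := RingQuot.mkAlgHom_surjective k (LeavittRel k Q) x
  induction y using FreeAlgebra.induction with
  | grade0 c => rw [AlgHom.commutes]; exact halg c
  | grade1 g => cases g with
    | vertex v => exact hp v
    | edge e => exact hed e
    | ghost e => exact hgh e
  | mul a b ha hb => rw [map_mul]; exact hmul _ _ ha hb
  | add a b ha hb => rw [map_add]; exact hadd _ _ ha hb

section basics
variable (k : Type) [CommRing k] (Q : FinQuiver)

theorem revToLeavitt_p (v : Q.V) :
    revToLeavitt k Q (PathAlg.p k Q.rev v) = Leavitt.p k Q v := by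
  unfold revToLeavitt PathAlg.p PathAlg.mk
  erw [RingQuot.liftAlgHom_mkAlgHom_apply]
  simp [FreeAlgebra.lift_ι_apply]

theorem revToLeavitt_arrow (e : Q.A) :
    revToLeavitt k Q (PathAlg.arrow k Q.rev e) = Leavitt.gh k Q e := by
  unfold revToLeavitt PathAlg.arrow PathAlg.mk
  erw [RingQuot.liftAlgHom_mkAlgHom_apply]
  simp [FreeAlgebra.lift_ι_apply]

theorem Leavitt.src_mul_ed (e : Q.A) :
    Leavitt.p k Q (Q.src e) * Leavitt.ed k Q e = Leavitt.ed k Q e := by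
  have h := Leavitt.mk_rel k Q (LeavittRel.src_mul e)
  simpa [map_mul, Leavitt.p, Leavitt.ed] using h

theorem Leavitt.gh_mul_ed_self (e : Q.A) :
    Leavitt.gh k Q e * Leavitt.ed k Q e = Leavitt.p k Q (Q.tgt e) := by
  have h := Leavitt.mk_rel k Q (LeavittRel.ghost_mul_edge_self e)
  simpa [map_mul, Leavitt.p, Leavitt.ed, Leavitt.gh] using h

theorem Leavitt.gh_mul_ed_ne (e f : Q.A) (hne : e ≠ f) :
    Leavitt.gh k Q e * Leavitt.ed k Q f = 0 := by
  have h := Leavitt.mk_rel k Q (LeavittRel.ghost_mul_edge_ne e f hne)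
  simpa [map_mul, Leavitt.p, Leavitt.ed, Leavitt.gh] using h

theorem Leavitt.ck (v : Q.V) (hv : ¬ IsSink Q v) :
    ∑ e ∈ Finset.univ.filter (fun e : Q.A => Q.src e = v),
      Leavitt.ed k Q e * Leavitt.gh k Q e = Leavitt.p k Q v := by
  have hv' : ∃ e : Q.A, Q.src e = v := by simpa [IsSink] using hv
  have h := Leavitt.mk_rel k Q (LeavittRel.cuntz_krieger v hv')
  simpa [map_mul, map_sum, Leavitt.p, Leavitt.ed, Leavitt.gh] using h

end basics

section fil
set_option linter.unusedSectionVars false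
variable (k : Type) [CommRing k] (Q : FinQuiver) {N T : Type} [AddCommGroup N]
  [Module (PathAlg k Q.rev) N] [AddCommGroup T] [Module (Leavitt k Q) T]

/-- Filtration of an induced module by lengths of real paths. -/
inductive Fil (i : N →+ T) : ℕ → T → Prop
  | base (m : ℕ) (n : N) : Fil i m (i n)
  | add (m : ℕ) (a b : T) : Fil i m a → Fil i m b → Fil i m (a + b)
  | ed (m : ℕ) (e : Q.A) (a : T) : Fil i m a → Fil i (m + 1) (Leavitt.ed k Q e • a)

variable {k Q}
variable {i : N →+ T} (hi : ∀ x n, revToLeavitt k Q x • i n = i (x • n))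

theorem Fil.succ {m : ℕ} {u : T} (h : Fil k Q i m u) : Fil k Q i (m + 1) u := by
  induction h with
  | base m n => exact .base _ n
  | add m a b _ _ ha hb => exact .add _ _ _ ha hb
  | ed m e a _ ha => exact .ed _ _ _ ha

theorem Fil.mono {m m' : ℕ} (hm : m ≤ m') {u : T} (h : Fil k Q i m u) : Fil k Q i m' u := by
  induction hm with
  | refl => exact h
  | step _ ih => exact ih.succ

theorem Fil.p (hi : ∀ x n, revToLeavitt k Q x • i n = i (x • n)) {m : ℕ} {u : T}
    (h : Fil k Q i m u) (v : Q.V) : Fil k Q i m (Leavitt.p k Q v • u) := by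
  induction h with
  | base m n => rw [← revToLeavitt_p, hi]; exact .base _ _
  | add m a b _ _ ha hb => rw [smul_add]; exact .add _ _ _ ha hb
  | ed m e a h ha =>
    rw [← mul_smul]
    by_cases hv : v = Q.src e
    · rw [hv, Leavitt.src_mul_ed]; exact .ed _ _ _ h
    · rw [← Leavitt.src_mul_ed, ← mul_assoc, Leavitt.p_mul_ne _ _ _ _ hv, zero_mul, zero_smul,
        ← i.map_zero]
      exact .base _ _

theorem Fil.c (hi : ∀ x n, revToLeavitt k Q x • i n = i (x • n)) {m : ℕ} {u : T}
    (h : Fil k Q i m u) (c : k) : Fil k Q i m (algebraMap k (Leavitt k Q) c • u) := by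
  induction h with
  | base m n => rw [← (revToLeavitt k Q).commutes, hi]; exact .base _ _
  | add m a b _ _ ha hb => rw [smul_add]; exact .add _ _ _ ha hb
  | ed m e a h ha =>
    rw [← mul_smul, Algebra.commutes, mul_smul]
    exact .ed _ _ _ ha

theorem Fil.gh (hi : ∀ x n, revToLeavitt k Q x • i n = i (x • n)) {m : ℕ} {u : T}
    (h : Fil k Q i m u) (e : Q.A) : Fil k Q i (m - 1) (Leavitt.gh k Q e • u) := by
  induction h with
  | base m n => rw [← revToLeavitt_arrow, hi]; exact .base _ _
  | add m a b _ _ ha hb => rw [smul_add]; exact .add _ _ _ ha hb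
  | ed m f a h ha =>
    rw [← mul_smul]
    by_cases hv : e = f
    · rw [hv, Leavitt.gh_mul_ed_self]; exact h.p hi _
    · rw [Leavitt.gh_mul_ed_ne _ _ _ _ hv, zero_smul, ← i.map_zero]
      exact .base _ _

theorem Fil.sink (hi : ∀ x n, revToLeavitt k Q x • i n = i (x • n)) {m : ℕ} {u : T}
    (h : Fil k Q i m u) (v : Q.V) (hv : IsSink Q v) : ∃ n, Leavitt.p k Q v • u = i n := by
  induction h with
  | base m n => rw [← revToLeavitt_p, hi]; exact ⟨_, rfl⟩
  | add m a b _ _ ha hb =>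
    obtain ⟨x, hx⟩ := ha
    obtain ⟨y, hy⟩ := hb
    exact ⟨x + y, by rw [smul_add, hx, hy, map_add]⟩
  | ed m e a h ha =>
    refine ⟨0, ?_⟩
    rw [← mul_smul, ← Leavitt.src_mul_ed, ← mul_assoc,
      Leavitt.p_mul_ne _ _ _ _ (fun h => hv e h.symm), zero_mul, zero_smul, map_zero]

theorem Fil.zero {m : ℕ} {u : T} (h : Fil k Q i m u) (hm : m = 0) : ∃ n, u = i n := by
  induction h with
  | base m n => exact ⟨n, rfl⟩
  | add m a b _ _ ha hb =>
    obtain ⟨x, hx⟩ := ha hm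
    obtain ⟨y, hy⟩ := hb hm
    exact ⟨x + y, by rw [hx, hy, map_add]⟩
  | ed m e a h ha => omega

theorem exists_p_smul_ne {u : T} (hu : u ≠ 0) : ∃ v : Q.V, Leavitt.p k Q v • u ≠ 0 := by
  by_contra! hc
  apply hu
  rw [← one_smul (Leavitt k Q) u, ← Leavitt.sum_p, Finset.sum_smul]
  exact Finset.sum_eq_zero fun v _ => hc v

theorem Fil.meets (hi : ∀ x n, revToLeavitt k Q x • i n = i (x • n))
    (U : Submodule (Leavitt k Q) T) (m : ℕ) : ∀ u, Fil k Q i m u → u ≠ 0 → u ∈ U →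
      ∃ n, i n ≠ 0 ∧ i n ∈ U := by
  induction m with
  | zero =>
    intro u h h0 hU
    obtain ⟨n, rfl⟩ := h.zero rfl
    exact ⟨n, h0, hU⟩
  | succ m ih =>
    intro u h h0 hU
    obtain ⟨v, hv⟩ := exists_p_smul_ne (k := k) (Q := Q) h0
    by_cases hs : IsSink Q v
    · obtain ⟨n, hn⟩ := h.sink hi v hs
      exact ⟨n, hn ▸ hv, hn ▸ U.smul_mem _ hU⟩
    · rw [← Leavitt.ck k Q v hs, Finset.sum_smul] at hv
      obtain ⟨e, -, he⟩ := Finset.exists_ne_zero_of_sum_ne_zero hv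
      refine ih (Leavitt.gh k Q e • u) (h.gh hi e) (fun h0 => he ?_) (U.smul_mem _ hU)
      rw [mul_smul, h0, smul_zero]

theorem Fil.exists_all (hi : ∀ x n, revToLeavitt k Q x • i n = i (x • n))
    (hspan : Submodule.span (Leavitt k Q) (Set.range i) = ⊤) (u : T) : ∃ m, Fil k Q i m u := by
  have hu : u ∈ Submodule.span (Leavitt k Q) (Set.range i) := hspan ▸ Submodule.mem_top
  have hadd : ∀ a b : T, (∃ m, Fil k Q i m a) → (∃ m, Fil k Q i m b) →
      ∃ m, Fil k Q i m (a + b) := by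
    rintro a b ⟨m, ha⟩ ⟨m', hb⟩
    exact ⟨max m m', .add _ _ _ (ha.mono (le_max_left _ _)) (hb.mono (le_max_right _ _))⟩
  induction hu using Submodule.span_induction with
  | mem x hx => obtain ⟨n, rfl⟩ := hx; exact ⟨0, .base _ _⟩
  | zero => exact ⟨0, i.map_zero ▸ .base _ _⟩
  | add a b _ _ ha hb => exact hadd _ _ ha hb
  | smul l a _ ha =>
    revert ha
    revert a
    refine Leavitt.induct k Q (C := fun l => ∀ a : T, a ∈ Submodule.span (Leavitt k Q) (Set.range i) →
      (∃ m, Fil k Q i m a) →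
      ∃ m, Fil k Q i m (l • a)) ?_ ?_ ?_ ?_ ?_ ?_ l
    · rintro c a - ⟨m, h⟩; exact ⟨m, h.c hi c⟩
    · rintro v a - ⟨m, h⟩; exact ⟨m, h.p hi v⟩
    · rintro e a - ⟨m, h⟩; exact ⟨m + 1, .ed _ _ _ h⟩
    · rintro e a - ⟨m, h⟩; exact ⟨m - 1, h.gh hi e⟩
    · intro x y hx hy a ha h
      rw [mul_smul]
      exact hx _ (hspan ▸ Submodule.mem_top) (hy _ ha h)
    · intro x y hx hy a ha h
      rw [add_smul]
      exact hadd _ _ (hx _ ha h) (hy _ ha h)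

theorem simple_of_nonzero [IsSimpleModule (PathAlg k Q.rev) N]
    (hi : ∀ x n, revToLeavitt k Q x • i n = i (x • n))
    (hspan : Submodule.span (Leavitt k Q) (Set.range i) = ⊤)
    (hne : ∃ n, i n ≠ 0) : IsSimpleModule (Leavitt k Q) T := by
  obtain ⟨n0, hn0⟩ := hne
  have : Nontrivial T := ⟨⟨i n0, 0, hn0⟩⟩
  rw [isSimpleModule_iff]
  refine { exists_pair_ne := ⟨⊥, ⊤, bot_ne_top⟩, eq_bot_or_eq_top := fun U => ?_ }
  by_cases hU : U = ⊥
  · exact .inl hU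
  right
  obtain ⟨u, huU, hu0⟩ := U.ne_bot_iff.mp hU
  obtain ⟨m, hm⟩ := Fil.exists_all hi hspan u
  obtain ⟨n, hn, hnU⟩ := Fil.meets hi U m u hm hu0 huU
  have hn0 : n ≠ 0 := by rintro rfl; exact hn i.map_zero
  rw [eq_top_iff, ← hspan, Submodule.span_le]
  rintro _ ⟨n', rfl⟩
  obtain ⟨x, rfl⟩ := IsSimpleModule.toSpanSingleton_surjective (PathAlg k Q.rev) hn0 n'
  rw [LinearMap.toSpanSingleton_apply, ← hi]
  exact U.smul_mem _ hnU

end fil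

section model
set_option linter.unusedSectionVars false
variable (k : Type) [CommRing k] (Q : FinQuiver) (N : Type) [AddCommGroup N]
  [Module (PathAlg k Q.rev) N] [Module k N] [IsScalarTower k (PathAlg k Q.rev) N]

/-- Paths starting at a vertex, long or ending in a sink. -/
def Good : ℕ → Q.V → List Q.A → Prop
  | m, v, [] => m = 0 ∨ IsSink Q v
  | m, v, e :: l => Q.src e = v ∧ Good (m - 1) (Q.tgt e) l

variable {Q} in
theorem Good.anti {m m' : ℕ} (h : m ≤ m') {v : Q.V} {l : List Q.A} (hg : Good Q m' v l) :
    Good Q m v l := by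
  induction l generalizing m m' v with
  | nil => exact hg.imp (fun h' => by omega) id
  | cons e l ih => exact ⟨hg.1, ih (by omega) hg.2⟩

/-- Functions on pairs (vertex, list of arrows). -/
abbrev Fn : Type := Q.V → List Q.A → N

/-- Functions that vanish on good paths. -/
def KK : Submodule k (Fn Q N) where
  carrier := {f | ∃ m, ∀ v l, Good Q m v l → f v l = 0}
  zero_mem' := ⟨0, fun _ _ _ => rfl⟩
  add_mem' := by
    rintro f g ⟨m, hf⟩ ⟨m', hg⟩
    refine ⟨max m m', fun v l h => ?_⟩
    rw [Pi.add_apply, Pi.add_apply, hf _ _ (h.anti (le_max_left _ _)),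
      hg _ _ (h.anti (le_max_right _ _)), add_zero]
  smul_mem' := by
    rintro c f ⟨m, hf⟩
    refine ⟨m, fun v l h => ?_⟩
    rw [Pi.smul_apply, Pi.smul_apply, hf _ _ h, smul_zero]

/-- Vertex operator. -/
def opP (v : Q.V) : Fn Q N →ₗ[k] Fn Q N where
  toFun f := fun w l => if w = v then f w l else 0
  map_add' f g := by ext w l; by_cases h : w = v <;> simp [h]
  map_smul' c f := by ext w l; by_cases h : w = v <;> simp [h]

/-- Ghost operator. -/
def opG (e : Q.A) : Fn Q N →ₗ[k] Fn Q N where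
  toFun f := fun w l => if w = Q.tgt e then f (Q.src e) (e :: l) else 0
  map_add' f g := by ext w l; by_cases h : w = Q.tgt e <;> simp [h]
  map_smul' c f := by ext w l; by_cases h : w = Q.tgt e <;> simp [h]

/-- Underlying function of the arrow operator. -/
def opEfun (e : Q.A) (f : Fn Q N) : Fn Q N
  | _, [] => 0
  | w, e' :: l => if w = Q.src e ∧ e' = e then f (Q.tgt e) l else 0

/-- Arrow operator. -/
def opE (e : Q.A) : Fn Q N →ₗ[k] Fn Q N where
  toFun f := opEfun Q N e f
  map_add' f g := by
    ext w l
    cases l with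
    | nil => simp [opEfun]
    | cons e' l => by_cases h : w = Q.src e ∧ e' = e <;> simp [opEfun, h]
  map_smul' c f := by
    ext w l
    cases l with
    | nil => simp [opEfun]
    | cons e' l => by_cases h : w = Q.src e ∧ e' = e <;> simp [opEfun, h]

theorem opP_mem (v : Q.V) : KK k Q N ≤ (KK k Q N).comap (opP k Q N v) := by
  rintro f ⟨m, hf⟩
  refine ⟨m, fun w l h => ?_⟩
  simp [opP, hf w l h]

theorem opG_mem (e : Q.A) : KK k Q N ≤ (KK k Q N).comap (opG k Q N e) := by
  rintro f ⟨m, hf⟩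
  refine ⟨m, fun w l h => ?_⟩
  by_cases hw : w = Q.tgt e
  · subst hw
    simp [opG, hf (Q.src e) (e :: l) ⟨rfl, h.anti (by omega)⟩]
  · simp [opG, hw]

theorem opE_mem (e : Q.A) : KK k Q N ≤ (KK k Q N).comap (opE k Q N e) := by
  rintro f ⟨m, hf⟩
  refine ⟨m + 1, fun w l h => ?_⟩
  cases l with
  | nil => rfl
  | cons e' l =>
    by_cases hw : w = Q.src e ∧ e' = e
    · obtain ⟨rfl, rfl⟩ := hw
      simp [opE, opEfun, hf _ l h.2]
    · simp [opE, opEfun, hw]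

/-- The model module. -/
abbrev MM : Type := Fn Q N ⧸ KK k Q N

/-- Operators on the model. -/
def genOp : LGen Q → Module.End k (MM k Q N)
  | .vertex v => (KK k Q N).mapQ _ (opP k Q N v) (opP_mem k Q N v)
  | .edge e => (KK k Q N).mapQ _ (opE k Q N e) (opE_mem k Q N e)
  | .ghost e => (KK k Q N).mapQ _ (opG k Q N e) (opG_mem k Q N e)

theorem genOp_rel {x y : FreeAlgebra k (LGen Q)} (h : LeavittRel k Q x y) :
    FreeAlgebra.lift k (genOp k Q N) x = FreeAlgebra.lift k (genOp k Q N) y := by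
  induction h with
  | vertex_mul_self v =>
    simp only [map_mul, FreeAlgebra.lift_ι_apply]
    refine Submodule.linearMap_qext _ (LinearMap.ext fun f => ?_)
    refine congrArg (KK k Q N).mkQ (?_ : opP k Q N v (opP k Q N v f) = opP k Q N v f)
    ext w l
    by_cases hw : w = v <;> simp [opP, hw]
  | vertex_mul_ne v v' hne =>
    simp only [map_mul, FreeAlgebra.lift_ι_apply, map_zero]
    refine Submodule.linearMap_qext _ (LinearMap.ext fun f => ?_)
    refine congrArg (KK k Q N).mkQ (?_ : opP k Q N v (opP k Q N v' f) = 0)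
    ext w l
    by_cases hw : w = v
    · subst hw; simp [opP, hne]
    · simp [opP, hw]
  | sum_vertex =>
    simp only [map_sum, FreeAlgebra.lift_ι_apply, map_one]
    refine Submodule.linearMap_qext _ (LinearMap.ext fun f => ?_)
    have : (∑ v, opP k Q N v f) = f := by
      ext w l
      simp [opP, Finset.sum_apply]
    simp only [LinearMap.comp_apply, LinearMap.sum_apply, Module.End.one_apply]
    conv_rhs => rw [← this, map_sum]
    rfl
  | src_mul e =>
    simp only [map_mul, FreeAlgebra.lift_ι_apply]
    refine Submodule.linearMap_qext _ (LinearMap.ext fun f => ?_)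
    refine congrArg (KK k Q N).mkQ
      (?_ : opP k Q N (Q.src e) (opE k Q N e f) = opE k Q N e f)
    ext w l
    by_cases hw : w = Q.src e <;> cases l <;> simp [opP, opE, opEfun, hw]
  | mul_tgt e =>
    simp only [map_mul, FreeAlgebra.lift_ι_apply]
    refine Submodule.linearMap_qext _ (LinearMap.ext fun f => ?_)
    refine congrArg (KK k Q N).mkQ
      (?_ : opE k Q N e (opP k Q N (Q.tgt e) f) = opE k Q N e f)
    ext w l
    cases l <;> simp [opP, opE, opEfun]
  | tgt_mul_ghost e =>
    simp only [map_mul, FreeAlgebra.lift_ι_apply]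
    refine Submodule.linearMap_qext _ (LinearMap.ext fun f => ?_)
    refine congrArg (KK k Q N).mkQ
      (?_ : opP k Q N (Q.tgt e) (opG k Q N e f) = opG k Q N e f)
    ext w l
    by_cases hw : w = Q.tgt e <;> simp [opP, opG, hw]
  | ghost_mul_src e =>
    simp only [map_mul, FreeAlgebra.lift_ι_apply]
    refine Submodule.linearMap_qext _ (LinearMap.ext fun f => ?_)
    refine congrArg (KK k Q N).mkQ
      (?_ : opG k Q N e (opP k Q N (Q.src e) f) = opG k Q N e f)
    ext w l
    simp [opP, opG]
  | ghost_mul_edge_self e =>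
    simp only [map_mul, FreeAlgebra.lift_ι_apply]
    refine Submodule.linearMap_qext _ (LinearMap.ext fun f => ?_)
    refine congrArg (KK k Q N).mkQ
      (?_ : opG k Q N e (opE k Q N e f) = opP k Q N (Q.tgt e) f)
    ext w l
    by_cases hw : w = Q.tgt e <;> simp [opP, opG, opE, opEfun, hw]
  | ghost_mul_edge_ne e e' hne =>
    simp only [map_mul, FreeAlgebra.lift_ι_apply, map_zero]
    refine Submodule.linearMap_qext _ (LinearMap.ext fun f => ?_)
    refine congrArg (KK k Q N).mkQ
      (?_ : opG k Q N e (opE k Q N e' f) = 0)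
    ext w l
    simp [opG, opE, opEfun, hne]
  | cuntz_krieger v hv =>
    simp only [map_sum, map_mul, FreeAlgebra.lift_ι_apply]
    refine Submodule.linearMap_qext _ (LinearMap.ext fun f => ?_)
    have : (KK k Q N).mkQ (∑ e ∈ Finset.univ.filter (fun e : Q.A => Q.src e = v),
        opE k Q N e (opG k Q N e f)) = (KK k Q N).mkQ (opP k Q N v f) := by
      rw [← sub_eq_zero, ← map_sub, Submodule.mkQ_apply, Submodule.Quotient.mk_eq_zero]
      refine ⟨1, fun w l hg => ?_⟩
      cases l with
      | nil =>
        have hs : IsSink Q w := hg.resolve_left (by omega)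
        have hwv : w ≠ v := by
          rintro rfl
          obtain ⟨e, he⟩ := hv
          exact hs e he
        simp [opE, opEfun, opP, Finset.sum_apply, hwv]
      | cons e l =>
        have he : Q.src e = w := hg.1
        subst he
        by_cases hwv : Q.src e = v
        · subst hwv
          simp only [Pi.sub_apply, Finset.sum_apply, sub_eq_zero]
          rw [Finset.sum_eq_single e]
          · simp [opE, opEfun, opP, opG]
          · intro b _ hb
            simp [opE, opEfun, hb.symm]
          · simp
        · simp only [Pi.sub_apply, Finset.sum_apply, sub_eq_zero]
          rw [Finset.sum_eq_zero]
          · simp [opP, hwv]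
          · intro b hb
            simp only [Finset.mem_filter, Finset.mem_univ, true_and] at hb
            have : Q.src e ≠ Q.src b := fun h => hwv (h.trans hb)
            simp [opE, opEfun, this]
    simp only [LinearMap.comp_apply, LinearMap.sum_apply]
    refine Eq.trans ?_ this
    rw [map_sum]
    rfl

/-- The representation of the Leavitt path algebra on the model. -/
noncomputable def rep : Leavitt k Q →ₐ[k] Module.End k (MM k Q N) :=
  RingQuot.liftAlgHom k ⟨FreeAlgebra.lift k (genOp k Q N), fun _ _ h => genOp_rel k Q N h⟩

theorem rep_mk (x : FreeAlgebra k (LGen Q)) :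
    rep k Q N (Leavitt.mk k Q x) = FreeAlgebra.lift k (genOp k Q N) x := by
  unfold rep Leavitt.mk
  erw [RingQuot.liftAlgHom_mkAlgHom_apply]

theorem rep_p (v : Q.V) : rep k Q N (Leavitt.p k Q v) = genOp k Q N (.vertex v) := by
  rw [Leavitt.p, rep_mk, FreeAlgebra.lift_ι_apply]

theorem rep_gh (e : Q.A) : rep k Q N (Leavitt.gh k Q e) = genOp k Q N (.ghost e) := by
  rw [Leavitt.gh, rep_mk, FreeAlgebra.lift_ι_apply]

/-- Action of a ghost path on `N`. -/
noncomputable def act : List Q.A → N → N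
  | [], n => n
  | e :: l, n => act l (PathAlg.arrow k Q.rev e • n)

theorem act_zero (l : List Q.A) : act k Q N l 0 = 0 := by
  induction l with
  | nil => rfl
  | cons e l ih => simp [act, ih]

theorem act_add (l : List Q.A) (a b : N) : act k Q N l (a + b) = act k Q N l a + act k Q N l b := by
  induction l generalizing a b with
  | nil => rfl
  | cons e l ih => simp [act, ih]

theorem act_c (l : List Q.A) (c : k) (a : N) :
    act k Q N l (algebraMap k (PathAlg k Q.rev) c • a) =
      algebraMap k (PathAlg k Q.rev) c • act k Q N l a := by
  induction l generalizing a with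
  | nil => rfl
  | cons e l ih => rw [act, act, ← mul_smul, ← Algebra.commutes, mul_smul, ih]

/-- The map from `N` to the model. -/
noncomputable def jj : N →+ MM k Q N :=
  (KK k Q N).mkQ.toAddMonoidHom.comp
    { toFun := fun n v l => act k Q N l (PathAlg.p k Q.rev v • n)
      map_zero' := by ext v l; simp [act_zero]
      map_add' := fun a b => by ext v l; simp [act_add] }

theorem jj_apply (n : N) : jj k Q N n =
    (KK k Q N).mkQ (fun v l => act k Q N l (PathAlg.p k Q.rev v • n)) := rfl

theorem rep_jj (x : PathAlg k Q.rev) : ∀ n : N,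
    rep k Q N (revToLeavitt k Q x) (jj k Q N n) = jj k Q N (x • n) := by
  refine PathAlg.induct k Q.rev (C := fun x => ∀ n : N,
    rep k Q N (revToLeavitt k Q x) (jj k Q N n) = jj k Q N (x • n)) ?_ ?_ ?_ ?_ ?_ x
  · intro c n
    rw [AlgHom.commutes, AlgHom.commutes, Module.algebraMap_end_apply, jj_apply, jj_apply,
      ← map_smul]
    congr 1
    ext v l
    rw [Pi.smul_apply, Pi.smul_apply, ← mul_smul, ← Algebra.commutes, mul_smul, act_c,
      algebraMap_smul]
  · intro (v : Q.V) n
    have h1 : rep k Q N (revToLeavitt k Q (PathAlg.p k Q.rev v)) =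
        genOp k Q N (.vertex v) := by
      refine (congrArg (rep k Q N) (revToLeavitt_p k Q v)).trans ?_
      exact rep_p k Q N v
    refine (LinearMap.congr_fun h1 _).trans ?_
    refine congrArg (KK k Q N).mkQ (?_ : opP k Q N v _ = _)
    ext w l
    change (if w = v then act k Q N l (PathAlg.p k Q.rev w • n) else 0) =
      act k Q N l (PathAlg.p k Q.rev w • PathAlg.p k Q.rev v • n)
    rw [← mul_smul]
    by_cases hw : w = v
    · rw [if_pos hw]
      subst hw
      exact congrArg (fun t => act k Q N l (t • n)) (PathAlg.p_mul_self k Q.rev w).symm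
    · rw [if_neg hw]
      refine Eq.trans ?_ (congrArg (fun t => act k Q N l (t • n))
        (PathAlg.p_mul_ne k Q.rev w v hw).symm)
      simp only [zero_smul, act_zero]
  · intro e n
    have h1 : rep k Q N (revToLeavitt k Q (PathAlg.arrow k Q.rev e)) =
        genOp k Q N (.ghost e) := by
      refine (congrArg (rep k Q N) (revToLeavitt_arrow k Q e)).trans ?_
      exact rep_gh k Q N e
    refine (LinearMap.congr_fun h1 _).trans ?_
    refine congrArg (KK k Q N).mkQ (?_ : opG k Q N e _ = _)
    ext w l
    change (if w = Q.tgt e then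
        act k Q N l (PathAlg.arrow k Q.rev e • PathAlg.p k Q.rev (Q.src e) • n) else 0) =
      act k Q N l (PathAlg.p k Q.rev w • PathAlg.arrow k Q.rev e • n)
    rw [← mul_smul, ← mul_smul]
    by_cases hw : w = Q.tgt e
    · rw [if_pos hw]
      subst hw
      exact congrArg (fun t => act k Q N l (t • n))
        ((PathAlg.arrow_mul_tgt k Q.rev e).trans (PathAlg.src_mul_arrow k Q.rev e).symm)
    · rw [if_neg hw]
      have h2 : PathAlg.p k Q.rev w * PathAlg.arrow k Q.rev e = 0 := by
        rw [← PathAlg.src_mul_arrow k Q.rev e, ← mul_assoc]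
        exact (congrArg (· * _) (PathAlg.p_mul_ne k Q.rev w _ hw)).trans (zero_mul _)
      refine Eq.trans ?_ (congrArg (fun t => act k Q N l (t • n)) h2.symm)
      simp only [zero_smul, act_zero]
  · intro a b ha hb n
    rw [map_mul, map_mul, Module.End.mul_apply, hb, ha, mul_smul]
  · intro a b ha hb n
    rw [map_add, map_add, LinearMap.add_apply, ha, hb, add_smul, map_add]

theorem good_zero
    (hinj : ∀ v, ¬ IsSink Q v → ∀ n : N, PathAlg.p k Q.rev v • n = n →
      (∀ e, Q.src e = v → PathAlg.arrow k Q.rev e • n = 0) → n = 0) (m : ℕ) :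
    ∀ (v : Q.V) (n : N), (∀ l, Good Q m v l → act k Q N l (PathAlg.p k Q.rev v • n) = 0) →
      PathAlg.p k Q.rev v • n = 0 := by
  induction m with
  | zero => exact fun v n h => h [] (.inl rfl)
  | succ m ih =>
    intro v n h
    by_cases hs : IsSink Q v
    · exact h [] (.inr hs)
    · refine hinj v hs _ (by rw [← mul_smul]; exact congrArg (· • n) (PathAlg.p_mul_self k Q.rev v)) ?_
      rintro e rfl
      have hh := ih (Q.tgt e) (PathAlg.arrow k Q.rev e • n) fun l hl => by
        have := h (e :: l) ⟨rfl, hl⟩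
        rw [act, ← mul_smul] at this
        erw [PathAlg.arrow_mul_tgt k Q.rev e] at this
        rw [← mul_smul]
        erw [PathAlg.src_mul_arrow k Q.rev e]
        exact this
      rw [← mul_smul] at hh ⊢
      erw [PathAlg.src_mul_arrow k Q.rev e] at hh
      erw [PathAlg.arrow_mul_tgt k Q.rev e]
      exact hh

theorem jj_inj
    (hinj : ∀ v, ¬ IsSink Q v → ∀ n : N, PathAlg.p k Q.rev v • n = n →
      (∀ e, Q.src e = v → PathAlg.arrow k Q.rev e • n = 0) → n = 0)
    (n : N) (h : jj k Q N n = 0) : n = 0 := by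
  rw [jj_apply, Submodule.mkQ_apply, Submodule.Quotient.mk_eq_zero] at h
  obtain ⟨m, hm⟩ := h
  rw [← one_smul (PathAlg k Q.rev) n, ← PathAlg.sum_p, Finset.sum_smul]
  exact Finset.sum_eq_zero fun v _ => good_zero k Q N hinj m v n (hm v)

end model

section tensor
open TensorProduct
variable (k : Type) [CommRing k] (Q : FinQuiver) (N : Type) [AddCommGroup N]
  [Module (PathAlg k Q.rev) N]

/-- The induced module. -/
abbrev TT : Type := TensorPhi (PathAlg k Q.rev) (Leavitt k Q) (revToLeavitt k Q).toRingHom N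

/-- The canonical map `n ↦ 1 ⊗ n`. -/
noncomputable def ii : N →+ TT k Q N :=
  (trel (PathAlg k Q.rev) (Leavitt k Q) (revToLeavitt k Q).toRingHom N).mkQ.toAddMonoidHom.comp
    (TensorProduct.mk ℤ (Leavitt k Q) N 1).toAddMonoidHom

theorem smul_ii (l : Leavitt k Q) (n : N) : l • ii k Q N n =
    (trel (PathAlg k Q.rev) (Leavitt k Q) (revToLeavitt k Q).toRingHom N).mkQ (l ⊗ₜ[ℤ] n) := by
  have : l ⊗ₜ[ℤ] n = l • ((1 : Leavitt k Q) ⊗ₜ[ℤ] n) := by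
    rw [TensorProduct.smul_tmul', smul_eq_mul, mul_one]
  rw [this, map_smul]
  rfl

theorem ii_smul (x : PathAlg k Q.rev) (n : N) :
    revToLeavitt k Q x • ii k Q N n = ii k Q N (x • n) := by
  rw [smul_ii, ← one_smul (Leavitt k Q) (ii k Q N (x • n)), smul_ii, ← sub_eq_zero, ← map_sub,
    Submodule.mkQ_apply, Submodule.Quotient.mk_eq_zero]
  exact Submodule.subset_span ⟨1, x, n, by rw [one_mul]; rfl⟩

theorem ii_span : Submodule.span (Leavitt k Q) (Set.range (ii k Q N)) = ⊤ := by
  rw [eq_top_iff]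
  rintro t -
  obtain ⟨t, rfl⟩ := Submodule.mkQ_surjective _ t
  induction t using TensorProduct.induction_on with
  | zero => rw [map_zero]; exact zero_mem _
  | tmul l n => rw [← smul_ii]; exact Submodule.smul_mem _ _ (Submodule.subset_span ⟨n, rfl⟩)
  | add a b ha hb => rw [map_add]; exact add_mem ha hb

theorem ii_ne {T : Type} [AddCommGroup T] [Module (Leavitt k Q) T] (j : N →+ T)
    (hj : ∀ x n, revToLeavitt k Q x • j n = j (x • n)) (n : N) (hn : ii k Q N n = 0) :
    j n = 0 := by
  let F : TensorProduct ℤ (Leavitt k Q) N →ₗ[Leavitt k Q] T :=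
    TensorProduct.AlgebraTensorModule.lift
      { toFun := fun l => (l • j.toIntLinearMap : N →ₗ[ℤ] T)
        map_add' := fun a b => by ext n; simp [add_smul]
        map_smul' := fun a b => by ext n; simp [mul_smul] }
  have hF : ∀ l n, F (l ⊗ₜ[ℤ] n) = l • j n := fun l n => rfl
  have hle : trel (PathAlg k Q.rev) (Leavitt k Q) (revToLeavitt k Q).toRingHom N ≤
      LinearMap.ker F := by
    refine Submodule.span_le.mpr ?_
    rintro _ ⟨l, p, m, rfl⟩
    rw [SetLike.mem_coe, LinearMap.mem_ker, map_sub, hF, hF, sub_eq_zero, mul_smul, ← hj]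
    rfl
  have h1 : (1 : Leavitt k Q) ⊗ₜ[ℤ] n ∈ trel (PathAlg k Q.rev) (Leavitt k Q)
      (revToLeavitt k Q).toRingHom N := (Submodule.Quotient.mk_eq_zero _).mp hn
  have := hle h1
  rwa [LinearMap.mem_ker, hF, one_smul] at this

end tensor

section coker
variable (k : Type) [Field k] (Q : FinQuiver)

theorem p_mem_pIdeal (v : Q.V) : PathAlg.p k Q.rev v ∈ pIdeal k Q v :=
  ⟨PathAlg.p k Q.rev v, PathAlg.p_mul_self k Q.rev v⟩

theorem arrow_mem_pIdeal (e : Q.A) : PathAlg.arrow k Q.rev e ∈ pIdeal k Q (Q.src e) :=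
  ⟨PathAlg.arrow k Q.rev e, PathAlg.arrow_mul_tgt k Q.rev e⟩

/-- The class of the vertex in the cokernel. -/
noncomputable def n0 (v : Q.V) : CokerNu k Q v :=
  (LinearMap.range (nu k Q v)).mkQ ⟨PathAlg.p k Q.rev v, p_mem_pIdeal k Q v⟩

theorem n0_gen (v : Q.V) (x : CokerNu k Q v) : ∃ r : PathAlg k Q.rev, x = r • n0 k Q v := by
  obtain ⟨⟨_, r, rfl⟩, rfl⟩ := Submodule.mkQ_surjective _ x
  refine ⟨r, ?_⟩
  rw [n0, ← map_smul]
  rfl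

theorem p_smul_n0 (v : Q.V) : PathAlg.p k Q.rev v • n0 k Q v = n0 k Q v := by
  rw [n0, ← map_smul]
  congr 1
  exact Subtype.ext (PathAlg.p_mul_self k Q.rev v)

theorem p_smul_n0_ne (v w : Q.V) (h : w ≠ v) : PathAlg.p k Q.rev w • n0 k Q v = 0 := by
  rw [n0, ← map_smul]
  refine Eq.trans (congrArg _ ?_) (map_zero (LinearMap.range (nu k Q v)).mkQ)
  exact Subtype.ext (PathAlg.p_mul_ne k Q.rev w v h)

theorem arrow_smul_n0 (e : Q.A) :
    PathAlg.arrow k Q.rev e • n0 k Q (Q.src e) = 0 := by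
  rw [n0, ← map_smul, Submodule.mkQ_apply, Submodule.Quotient.mk_eq_zero]
  refine ⟨Pi.single ⟨e, rfl⟩ ⟨PathAlg.p k Q.rev (Q.tgt e), p_mem_pIdeal k Q _⟩, ?_⟩
  refine Subtype.ext ?_
  change ∑ e' : {e' : Q.A // Q.src e' = Q.src e}, _ = PathAlg.arrow k Q.rev e * _
  rw [Finset.sum_eq_single ⟨e, rfl⟩]
  · rw [Pi.single_eq_same]
    exact (PathAlg.src_mul_arrow k Q.rev e).trans (PathAlg.arrow_mul_tgt k Q.rev e).symm
  · intro b _ hb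
    rw [Pi.single_eq_of_ne hb]
    exact zero_mul _
  · simp

theorem arrow_smul_n0_ne (v : Q.V) (e : Q.A) (h : Q.src e ≠ v) :
    PathAlg.arrow k Q.rev e • n0 k Q v = 0 := by
  have := PathAlg.arrow_mul_tgt k Q.rev e
  rw [← this, mul_smul]
  exact (congrArg _ (p_smul_n0_ne k Q v _ h)).trans (smul_zero _)

theorem smul_n0 (v : Q.V) (x : PathAlg k Q.rev) :
    ∃ c : k, x • n0 k Q v = algebraMap k (PathAlg k Q.rev) c • n0 k Q v := by
  induction x using PathAlg.induct with
  | halg c => exact ⟨c, rfl⟩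
  | hp w =>
    by_cases h : w = v
    · subst h; exact ⟨1, by rw [map_one, one_smul]; exact p_smul_n0 k Q w⟩
    · exact ⟨0, by rw [map_zero, zero_smul]; exact p_smul_n0_ne k Q v w h⟩
  | har e =>
    refine ⟨0, ?_⟩
    rw [map_zero, zero_smul]
    by_cases h : Q.src e = v
    · subst h; exact arrow_smul_n0 k Q e
    · exact arrow_smul_n0_ne k Q v e h
  | hmul a b ha hb =>
    obtain ⟨c, hc⟩ := ha
    obtain ⟨d, hd⟩ := hb
    exact ⟨d * c, by rw [mul_smul, hd, ← mul_smul, ← Algebra.commutes, mul_smul, hc, map_mul,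
      mul_smul]⟩
  | hadd a b ha hb =>
    obtain ⟨c, hc⟩ := ha
    obtain ⟨d, hd⟩ := hb
    exact ⟨c + d, by rw [add_smul, hc, hd, map_add, add_smul]⟩

theorem iso_of (v : Q.V) (N : Type) [AddCommGroup N]
    [Module (PathAlg k Q.rev) N] [Module k N] [IsScalarTower k (PathAlg k Q.rev) N]
    [IsSimpleModule (PathAlg k Q.rev) N] (n : N) (hn : n ≠ 0)
    (hp : PathAlg.p k Q.rev v • n = n)
    (ha : ∀ e, Q.src e = v → PathAlg.arrow k Q.rev e • n = 0) :
    Nonempty (N ≃ₗ[PathAlg k Q.rev] CokerNu k Q v) := by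
  let f : ↥(pIdeal k Q v) →ₗ[PathAlg k Q.rev] N :=
    (LinearMap.toSpanSingleton (PathAlg k Q.rev) N n).comp (pIdeal k Q v).subtype
  have hf : ∀ x, f x = (x : PathAlg k Q.rev) • n := fun x => rfl
  have hle : LinearMap.range (nu k Q v) ≤ LinearMap.ker f := by
    rintro _ ⟨x, rfl⟩
    rw [LinearMap.mem_ker, hf]
    change (∑ e : {e : Q.A // Q.src e = v}, _) • n = 0
    rw [Finset.sum_smul]
    refine Finset.sum_eq_zero fun e _ => ?_
    rw [mul_smul]
    erw [ha e.1 e.2]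
    rw [smul_zero]
  let g : CokerNu k Q v →ₗ[PathAlg k Q.rev] N := (LinearMap.range (nu k Q v)).liftQ f hle
  have hg0 : g (n0 k Q v) = n := hp
  have hginj : Function.Injective g := by
    rw [← LinearMap.ker_eq_bot, LinearMap.ker_eq_bot']
    intro x hx
    obtain ⟨r, rfl⟩ := n0_gen k Q v x
    obtain ⟨c, hc⟩ := smul_n0 k Q v r
    rw [hc] at hx ⊢
    rw [map_smul, hg0, algebraMap_smul] at hx
    rcases smul_eq_zero.mp hx with h | h
    · rw [h, map_zero, zero_smul]
    · exact absurd h hn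
  have hgsurj : Function.Surjective g := by
    intro y
    obtain ⟨r, rfl⟩ := IsSimpleModule.toSpanSingleton_surjective (PathAlg k Q.rev) hn y
    exact ⟨r • n0 k Q v, by rw [map_smul, hg0]; rfl⟩
  exact ⟨(LinearEquiv.ofBijective g ⟨hginj, hgsurj⟩).symm⟩

theorem ii_zero (v : Q.V) (hv : ¬ IsSink Q v) (N : Type) [AddCommGroup N]
    [Module (PathAlg k Q.rev) N] (φ : N ≃ₗ[PathAlg k Q.rev] CokerNu k Q v) (n : N) :
    ii k Q N n = 0 := by
  have h0 : ii k Q N (φ.symm (n0 k Q v)) = 0 := by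
    rw [← p_smul_n0, map_smul, ← ii_smul]
    erw [revToLeavitt_p k Q v]
    rw [← Leavitt.ck k Q v hv, Finset.sum_smul]
    refine Finset.sum_eq_zero fun e he => ?_
    obtain rfl : Q.src e = v := by simpa using he
    have h1 : PathAlg.arrow k Q.rev e • φ.symm (n0 k Q (Q.src e)) = 0 :=
      (φ.symm.map_smul _ _).symm.trans
        ((congrArg φ.symm (arrow_smul_n0 k Q e)).trans (map_zero φ.symm))
    rw [mul_smul, ← revToLeavitt_arrow, ii_smul]
    refine (congrArg (fun t => Leavitt.ed k Q e • ii k Q N t) h1).trans ?_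
    simp only [map_zero, smul_zero]
  obtain ⟨r, hr⟩ := n0_gen k Q v (φ n)
  have : n = r • φ.symm (n0 k Q v) := by rw [← map_smul, ← hr, φ.symm_apply_apply]
  rw [this, ← ii_smul, h0, smul_zero]

end coker

end LPA

open LPA in
/-- Let `N` be a finite-dimensional simple left `P_k(Ē)`-module.  Exactly one of
the following holds: (1) `N ≅ coker ν_i` for some non-sink vertex `i`, and then
`L_k(E) ⊗_{P_k(Ē)} N = 0`; or (2) `N` is not isomorphic to any `coker ν_i` with `i` a
non-sink, and then `L_k(E) ⊗_{P_k(Ē)} N` is a simple left `L_k(E)`-module. -/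
theorem statement_14 (k : Type) [Field k] (Q : FinQuiver) (N : Type) [AddCommGroup N]
    [Module (PathAlg k Q.rev) N] [Module k N] [IsScalarTower k (PathAlg k Q.rev) N]
    [IsSimpleModule (PathAlg k Q.rev) N] [FiniteDimensional k N] :
    ((∃ v : Q.V, ¬ IsSink Q v ∧ Nonempty (N ≃ₗ[PathAlg k Q.rev] CokerNu k Q v)) →
      Subsingleton
        (TensorPhi (PathAlg k Q.rev) (Leavitt k Q) (revToLeavitt k Q).toRingHom N)) ∧
    ((∀ v : Q.V, ¬ IsSink Q v → IsEmpty (N ≃ₗ[PathAlg k Q.rev] CokerNu k Q v)) →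
      IsSimpleModule (Leavitt k Q)
        (TensorPhi (PathAlg k Q.rev) (Leavitt k Q) (revToLeavitt k Q).toRingHom N)) := by
  constructor
  · rintro ⟨v, hv, ⟨φ⟩⟩
    have h : ∀ t : TT k Q N, t = 0 := by
      intro t
      have ht : t ∈ Submodule.span (Leavitt k Q) (Set.range (ii k Q N)) := by
        rw [ii_span]; exact Submodule.mem_top
      have hb : Submodule.span (Leavitt k Q) (Set.range (ii k Q N)) = ⊥ := by
        rw [Submodule.span_eq_bot]
        rintro _ ⟨n, rfl⟩
        exact ii_zero k Q v hv N φ n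
      rw [hb] at ht
      exact (Submodule.mem_bot _).mp ht
    exact ⟨fun a b => (h a).trans (h b).symm⟩
  · intro hN
    refine simple_of_nonzero (i := ii k Q N) (ii_smul k Q N) (ii_span k Q N) ?_
    have : Nontrivial N := IsSimpleModule.nontrivial (PathAlg k Q.rev) N
    obtain ⟨n, hn⟩ := exists_ne (0 : N)
    refine ⟨n, fun h0 => hn ?_⟩
    refine jj_inj k Q N ?_ n ?_
    · intro v hv m hp ha
      by_contra hm
      exact (hN v hv).elim (iso_of k Q v N m hm hp ha).some
    · letI : Module (Leavitt k Q) (MM k Q N) :=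
        Module.compHom (MM k Q N) (rep k Q N).toRingHom
      exact ii_ne k Q N (jj k Q N) (fun x m => rep_jj k Q N x m) n h0
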